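/- Let H be a real Hilbert space, A : H → Set H monotone, D : H → H η-cocoercive (η > 0), B : H → H μ-cocoercive (μ > 0). Fix γ > 0, ε > 0, β > 0 and λ > 0 with λ ≤ η/(1 + ηε) and λ ≤ μ/(με + β), and set V(x) := D x + ε x + β B x. Let x̄ ∈ H satisfy −V(x̄) ∈ A(x̄), let x ∈ H, let p ∈ H satisfy p + λ a = x − λ V(x) for some a ∈ A(p), and set v := γ(p − x). Then 2⟪v, x − x̄⟫ ≤ γ λ ε (λε − 2) ‖x − x̄‖². -/

import Mathlib

open scoped RealInnerProductSpace

/-!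
A forward-backward step is the forward map `x ↦ x - λ V x` followed by the resolvent of `A`, which
is nonexpansive because `A` is monotone. Cocoercivity is additive in the inverse constants, so
`C := D + β B` is cocoercive with constant `(1/η + β/μ)⁻¹`, and the Tikhonov term turns the forward
map into `(1 - λε) x - λ C x`. This is `(1 - λε)`-Lipschitz as soon as
`λ ≤ 2 (1 - λε) (1/η + β/μ)⁻¹`. The point `x̄` is fixed by the step, hence
`‖p - x̄‖ ≤ (1 - λε) ‖x - x̄‖`, and the polarization identity turns this contraction into the
descent inequality, since `(1 - λε)² - 1 = λε (λε - 2)`.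
-/

theorem mul_add_div_le_one_of_le_div {t μ ε β : ℝ} (hμ : 0 < μ) (hpos : 0 < μ * ε + β)
    (ht : t ≤ μ / (μ * ε + β)) : t * (ε + β / μ) ≤ 1 := by
  have hsum : ε + β / μ = (μ * ε + β) / μ := by field_simp
  rwa [hsum, ← mul_div_assoc, div_le_one hμ, ← le_div_iff₀ hpos]

theorem mul_add_half_add_le_one_of_le_div {t η μ ε β : ℝ} (hη : 0 < η) (hμ : 0 < μ) (hε : 0 ≤ ε)
    (hβ : 0 < β) (htη : t ≤ η / (1 + η * ε)) (htμ : t ≤ μ / (μ * ε + β)) :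
    t * (ε + (η⁻¹ + β / μ) / 2) ≤ 1 := by
  have hboundη : t * (ε + η⁻¹) ≤ 1 := by
    rw [add_comm] at htη
    exact one_div η ▸ mul_add_div_le_one_of_le_div hη (by positivity) htη
  have hboundμ : t * (ε + β / μ) ≤ 1 := mul_add_div_le_one_of_le_div hμ (by positivity) htμ
  linarith

section ForwardBackward

variable {H : Type*} [NormedAddCommGroup H] [InnerProductSpace ℝ H]

theorem two_mul_inner_sub_le_of_norm_sub_le {r : ℝ} {p x z : H} (h : ‖p - z‖ ≤ r * ‖x - z‖) :
    2 * ⟪p - x, x - z⟫ ≤ (r ^ 2 - 1) * ‖x - z‖ ^ 2 := by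
  have polarization : ‖p - z‖ ^ 2 = ‖p - x‖ ^ 2 + 2 * ⟪p - x, x - z⟫ + ‖x - z‖ ^ 2 := by
    rw [← norm_add_sq_real, sub_add_sub_cancel]
  have contraction : ‖p - z‖ ^ 2 ≤ r ^ 2 * ‖x - z‖ ^ 2 := by
    rw [← mul_pow]
    gcongr
  linarith [sq_nonneg ‖p - x‖]

theorem inv_add_inv_inv_mul_norm_add_sq_le {μ ν : ℝ} (hμ : 0 < μ) (hν : 0 < ν) (a b : H) :
    (μ⁻¹ + ν⁻¹)⁻¹ * ‖a + b‖ ^ 2 ≤ μ * ‖a‖ ^ 2 + ν * ‖b‖ ^ 2 := by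
  have hdefect : (μ + ν) * (μ * ‖a‖ ^ 2 + ν * ‖b‖ ^ 2) - μ * ν * ‖a + b‖ ^ 2
      = ‖μ • a - ν • b‖ ^ 2 := by
    rw [norm_add_sq_real, norm_sub_sq_real, real_inner_smul_left, real_inner_smul_right,
      norm_smul, norm_smul, Real.norm_of_nonneg hμ.le, Real.norm_of_nonneg hν.le]
    ring
  have hharmonic : (μ⁻¹ + ν⁻¹)⁻¹ = μ * ν / (μ + ν) := by
    field_simp
    ring
  rw [hharmonic, div_mul_eq_mul_div, div_le_iff₀ (by positivity)]
  linarith [sq_nonneg ‖μ • a - ν • b‖]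

/-- Monotonicity of a set-valued operator on a real inner product space, given as a map into
`Set H`; no maximality is required. -/
def IsMonotoneOperator (A : H → Set H) : Prop :=
  ∀ ⦃x y u v : H⦄, u ∈ A x → v ∈ A y → 0 ≤ ⟪u - v, x - y⟫

/-- `μ`-cocoercivity of a single-valued operator. Positivity of `μ` is not part of the
definition. -/
def IsCocoercive (μ : ℝ) (M : H → H) : Prop :=
  ∀ x y : H, μ * ‖M x - M y‖ ^ 2 ≤ ⟪M x - M y, x - y⟫

/-- `p` is a forward-backward iterate of `x` for the inclusion `0 ∈ A z + V z` with step size `lam`,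
that is, `p = (id + lam A)⁻¹ (x - lam V x)`. It is encoded as a relation, because the resolvent of a
monotone `A` that is not maximal need not be everywhere defined. -/
def IsForwardBackwardStep (A : H → Set H) (V : H → H) (lam : ℝ) (x p : H) : Prop :=
  ∃ a ∈ A p, p + lam • a = x - lam • V x

variable {A : H → Set H} {V : H → H} {lam : ℝ}

theorem IsMonotoneOperator.norm_sub_le (hA : IsMonotoneOperator A) (hlam : 0 ≤ lam) {p q u v : H}
    (hu : u ∈ A p) (hv : v ∈ A q) : ‖p - q‖ ≤ ‖(p + lam • u) - (q + lam • v)‖ := by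
  have hinner : 0 ≤ lam * ⟪p - q, u - v⟫ :=
    mul_nonneg hlam (real_inner_comm (p - q) (u - v) ▸ hA hu hv)
  refine le_of_sq_le_sq ?_ (norm_nonneg _)
  calc ‖p - q‖ ^ 2
      ≤ ‖p - q‖ ^ 2 + 2 * (lam * ⟪p - q, u - v⟫) + ‖lam • (u - v)‖ ^ 2 := by
        linarith [sq_nonneg ‖lam • (u - v)‖]
    _ = ‖(p - q) + lam • (u - v)‖ ^ 2 := by
        rw [norm_add_sq_real, real_inner_smul_right]
    _ = ‖(p + lam • u) - (q + lam • v)‖ ^ 2 := by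
        congr 2
        module

theorem IsForwardBackwardStep.of_neg_mem {z : H} (hz : -V z ∈ A z) :
    IsForwardBackwardStep A V lam z z :=
  ⟨-V z, hz, by rw [smul_neg, sub_eq_add_neg]⟩

theorem IsForwardBackwardStep.norm_sub_le (hA : IsMonotoneOperator A) (hlam : 0 ≤ lam)
    {x y p q : H} (hp : IsForwardBackwardStep A V lam x p)
    (hq : IsForwardBackwardStep A V lam y q) :
    ‖p - q‖ ≤ ‖(x - lam • V x) - (y - lam • V y)‖ := by
  obtain ⟨a, ha, hpa⟩ := hp
  obtain ⟨b, hb, hqb⟩ := hq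
  rw [← hpa, ← hqb]
  exact hA.norm_sub_le hlam ha hb

namespace IsCocoercive

variable {M N : H → H} {μ ν : ℝ}

theorem const_smul (hM : IsCocoercive μ M) {β : ℝ} (hβ : 0 < β) :
    IsCocoercive (μ / β) (β • M) := by
  intro x y
  calc μ / β * ‖β • M x - β • M y‖ ^ 2
      = β * (μ * ‖M x - M y‖ ^ 2) := by
        rw [← smul_sub, norm_smul, Real.norm_of_nonneg hβ.le]
        field_simp
    _ ≤ β * ⟪M x - M y, x - y⟫ := by
        gcongr
        exact hM x y
    _ = ⟪β • M x - β • M y, x - y⟫ := by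
        rw [← smul_sub, real_inner_smul_left]

theorem add (hM : IsCocoercive μ M) (hN : IsCocoercive ν N) (hμ : 0 < μ) (hν : 0 < ν) :
    IsCocoercive (μ⁻¹ + ν⁻¹)⁻¹ (M + N) := by
  intro x y
  simp only [Pi.add_apply, add_sub_add_comm]
  calc (μ⁻¹ + ν⁻¹)⁻¹ * ‖M x - M y + (N x - N y)‖ ^ 2
      ≤ μ * ‖M x - M y‖ ^ 2 + ν * ‖N x - N y‖ ^ 2 :=
        inv_add_inv_inv_mul_norm_add_sq_le hμ hν _ _
    _ ≤ ⟪M x - M y, x - y⟫ + ⟪N x - N y, x - y⟫ := add_le_add (hM x y) (hN x y)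
    _ = ⟪M x - M y + (N x - N y), x - y⟫ := (inner_add_left _ _ _).symm

theorem norm_smul_sub_smul_sub_le (hM : IsCocoercive μ M) {s : ℝ} (hs : 0 ≤ s) (hlam : 0 ≤ lam)
    (hstep : lam ≤ 2 * s * μ) (x y : H) :
    ‖(s • x - lam • M x) - (s • y - lam • M y)‖ ≤ s * ‖x - y‖ := by
  refine le_of_sq_le_sq ?_ (by positivity)
  have hcross : lam ^ 2 * ‖M x - M y‖ ^ 2 ≤ 2 * s * lam * ⟪x - y, M x - M y⟫ := by
    calc lam ^ 2 * ‖M x - M y‖ ^ 2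
        = lam * lam * ‖M x - M y‖ ^ 2 := by ring
      _ ≤ lam * (2 * s * μ) * ‖M x - M y‖ ^ 2 := by gcongr
      _ = 2 * s * lam * (μ * ‖M x - M y‖ ^ 2) := by ring
      _ ≤ 2 * s * lam * ⟪x - y, M x - M y⟫ := by
        gcongr
        exact real_inner_comm (x - y) (M x - M y) ▸ hM x y
  calc ‖(s • x - lam • M x) - (s • y - lam • M y)‖ ^ 2
      = ‖s • (x - y) - lam • (M x - M y)‖ ^ 2 := by
        congr 2
        module
    _ = (s * ‖x - y‖) ^ 2 - 2 * s * lam * ⟪x - y, M x - M y⟫ + lam ^ 2 * ‖M x - M y‖ ^ 2 := by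
        rw [norm_sub_sq_real, real_inner_smul_left, real_inner_smul_right, norm_smul, norm_smul,
          Real.norm_of_nonneg hs, Real.norm_of_nonneg hlam]
        ring
    _ ≤ (s * ‖x - y‖) ^ 2 := by linarith

end IsCocoercive

theorem IsForwardBackwardStep.norm_sub_le_of_isCocoercive {C : H → H} {κ ε : ℝ} {x y p q : H}
    (hA : IsMonotoneOperator A) (hC : IsCocoercive κ C) (hκ : 0 < κ) (hlam : 0 ≤ lam)
    (hstep : lam ≤ 2 * (1 - lam * ε) * κ)
    (hp : IsForwardBackwardStep A (fun z ↦ C z + ε • z) lam x p)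
    (hq : IsForwardBackwardStep A (fun z ↦ C z + ε • z) lam y q) :
    ‖p - q‖ ≤ (1 - lam * ε) * ‖x - y‖ := by
  have hs : 0 ≤ 1 - lam * ε := by
    have := nonneg_of_mul_nonneg_left (hlam.trans hstep) hκ
    linarith
  calc ‖p - q‖
      ≤ ‖(x - lam • (C x + ε • x)) - (y - lam • (C y + ε • y))‖ := hp.norm_sub_le hA hlam hq
    _ = ‖((1 - lam * ε) • x - lam • C x) - ((1 - lam * ε) • y - lam • C y)‖ := by
        congr 1
        module
    _ ≤ (1 - lam * ε) * ‖x - y‖ := hC.norm_smul_sub_smul_sub_le hs hlam hstep x y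

/-- The step-size condition `hstep` is the average of `lam * (ε + η⁻¹) ≤ 1` and
`lam * (ε + β / μ) ≤ 1`. -/
theorem FB_descent_inequality_general {D B : H → H} {η μ γ ε β : ℝ} (hη : 0 < η) (hμ : 0 < μ)
    (hA : IsMonotoneOperator A) (hD : IsCocoercive η D) (hB : IsCocoercive μ B)
    (hγ : 0 ≤ γ) (hβ : 0 < β) (hlam : 0 ≤ lam)
    (hstep : lam * (ε + (η⁻¹ + β / μ) / 2) ≤ 1) {xbar x p : H}
    (hxbar : -(D xbar + ε • xbar + β • B xbar) ∈ A xbar)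
    (hp : IsForwardBackwardStep A (fun z ↦ D z + ε • z + β • B z) lam x p) :
    2 * ⟪γ • (p - x), x - xbar⟫ ≤ γ * lam * ε * (lam * ε - 2) * ‖x - xbar‖ ^ 2 := by
  have hC : IsCocoercive (η⁻¹ + (μ / β)⁻¹)⁻¹ (D + β • B) :=
    hD.add (hB.const_smul hβ) hη (by positivity)
  have hstepC : lam ≤ 2 * (1 - lam * ε) * (η⁻¹ + (μ / β)⁻¹)⁻¹ := by
    rw [le_mul_inv_iff₀ (by positivity), inv_div]
    linarith
  have hV : (fun z ↦ D z + ε • z + β • B z) = fun z ↦ (D + β • B) z + ε • z :=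
    funext fun z ↦ add_right_comm _ _ _
  have hfix : IsForwardBackwardStep A (fun z ↦ D z + ε • z + β • B z) lam xbar xbar :=
    .of_neg_mem hxbar
  rw [hV] at hp hfix
  have hcontr : ‖p - xbar‖ ≤ (1 - lam * ε) * ‖x - xbar‖ :=
    hp.norm_sub_le_of_isCocoercive hA hC (by positivity) hlam hstepC hfix
  calc 2 * ⟪γ • (p - x), x - xbar⟫
      = γ * (2 * ⟪p - x, x - xbar⟫) := by
        rw [real_inner_smul_left]
        ring
    _ ≤ γ * (((1 - lam * ε) ^ 2 - 1) * ‖x - xbar‖ ^ 2) :=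
        mul_le_mul_of_nonneg_left (two_mul_inner_sub_le_of_norm_sub_le hcontr) hγ
    _ = γ * lam * ε * (lam * ε - 2) * ‖x - xbar‖ ^ 2 := by ring

end ForwardBackward

/-- the key descent inequality for the forward-backward dynamics:
`2⟪γ(p − x), x − x̄⟫ ≤ γλε(λε − 2)‖x − x̄‖²`. -/
theorem FB_descent_inequality
    {H : Type*} [NormedAddCommGroup H] [InnerProductSpace ℝ H]
    (A : H → Set H) (D B : H → H) (η μ : ℝ) (hη : 0 < η) (hμ : 0 < μ)
    (hAmono : ∀ ⦃x y u v : H⦄, u ∈ A x → v ∈ A y → (0:ℝ) ≤ ⟪u - v, x - y⟫)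
    (hDcoco : ∀ x y : H, η * ‖D x - D y‖^2 ≤ ⟪D x - D y, x - y⟫)
    (hBcoco : ∀ x y : H, μ * ‖B x - B y‖^2 ≤ ⟪B x - B y, x - y⟫)
    (γ ε β lam : ℝ) (hγ : 0 < γ) (hε : 0 < ε) (hβ : 0 < β) (hlam : 0 < lam)
    (hlam1 : lam ≤ η / (1 + η * ε)) (hlam2 : lam ≤ μ / (μ * ε + β))
    (xbar : H) (hxbar : -(D xbar + ε • xbar + β • B xbar) ∈ A xbar)
    (x p a : H) (ha : a ∈ A p)
    (hp : p + lam • a = x - lam • (D x + ε • x + β • B x)) :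
    2 * ⟪γ • (p - x), x - xbar⟫ ≤ γ * lam * ε * (lam * ε - 2) * ‖x - xbar‖^2 :=
  FB_descent_inequality_general hη hμ hAmono hDcoco hBcoco hγ.le hβ hlam.le
    (mul_add_half_add_le_one_of_le_div hη hμ hε.le hβ hlam1 hlam2) hxbar ⟨a, ha, hp⟩
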